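/- Two bounded countable abelian groups G₊ and G₋ are weakly isomorphic if and only if m̄_{G₊} = m̄_{G₋}. -/

import Mathlib

open DirectSum in
/-- The map of direct sums induced by a reindexing and maps of the summands. -/
noncomputable def dsReindex {I J : Type} [DecidableEq I] [DecidableEq J] {A : I → Type} {B : J → Type}
    [∀ i, AddCommGroup (A i)] [∀ j, AddCommGroup (B j)] (σ : I → J)
    (ψ : ∀ i, A i →+ B (σ i)) : (⨁ i, A i) →+ (⨁ j, B j) :=
  DirectSum.toAddMonoid (fun i => (DirectSum.of B (σ i)).comp (ψ i))

open DirectSum in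
lemma dsReindex_apply {I J : Type} [DecidableEq I] [DecidableEq J] {A : I → Type} {B : J → Type}
    [∀ i, AddCommGroup (A i)] [∀ j, AddCommGroup (B j)] (σ : I → J)
    (hσ : Function.Injective σ)
    (ψ : ∀ i, A i →+ B (σ i)) (x : ⨁ i, A i) (i : I) :
    dsReindex σ ψ x (σ i) = ψ i (x i) := by
  induction x using DirectSum.induction_on with
  | zero => simp
  | of i' a =>
    simp only [dsReindex, DirectSum.toAddMonoid_of, AddMonoidHom.comp_apply]
    by_cases h : i' = i
    · subst h
      simp
    · rw [DirectSum.of_eq_of_ne _ _ _ (fun h' => h (hσ h').symm),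
        DirectSum.of_eq_of_ne _ _ _ (fun h' => h h'.symm)]
      simp
  | add x y hx hy => simp [hx, hy]

open DirectSum in
lemma dsReindex_injective {I J : Type} [DecidableEq I] [DecidableEq J] {A : I → Type}
    {B : J → Type}
    [∀ i, AddCommGroup (A i)] [∀ j, AddCommGroup (B j)] (σ : I → J)
    (hσ : Function.Injective σ)
    (ψ : ∀ i, A i →+ B (σ i)) (hψ : ∀ i, Function.Injective (ψ i)) :
    Function.Injective (dsReindex σ ψ) := by
  intro x y h
  refine DFinsupp.ext fun i => hψ i ?_
  have := dsReindex_apply σ hσ ψ x i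
  rw [h, dsReindex_apply σ hσ ψ y i] at this
  exact this.symm

open DirectSum in
lemma mem_range_dsReindex {I J : Type} [DecidableEq I] [DecidableEq J] {A : I → Type}
    {B : J → Type}
    [∀ i, AddCommGroup (A i)] [∀ j, AddCommGroup (B j)] (σ : I → J)
    (ψ : ∀ i, A i →+ B (σ i)) (y : ⨁ j, B j)
    (h0 : ∀ j, j ∉ Set.range σ → y j = 0) (h1 : ∀ i, y (σ i) ∈ (ψ i).range) :
    y ∈ (dsReindex σ ψ).range := by
  classical
  rw [← DirectSum.sum_support_of y]
  refine AddSubgroup.sum_mem _ fun j _ => ?_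
  by_cases hj : j ∈ Set.range σ
  · obtain ⟨i, rfl⟩ := hj
    obtain ⟨a, ha⟩ := h1 i
    refine ⟨DirectSum.of A i a, ?_⟩
    simp [dsReindex, ha]
  · rw [h0 j hj, map_zero]
    exact zero_mem _

/-- For `a ∣ b`, an injection `ZMod a → ZMod b` whose range is the `a`-torsion. -/
lemma exists_zmod_emb (a b : ℕ) (ha : a ≠ 0) (hb : b ≠ 0) (h : a ∣ b) :
    ∃ ψ : ZMod a →+ ZMod b, Function.Injective ψ ∧ ∀ y, a • y = 0 → y ∈ ψ.range := by
  obtain ⟨c, rfl⟩ := h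
  have hc : c ≠ 0 := by rintro rfl; simp at hb
  have key : (zmultiplesHom (ZMod (a * c)) (c : ZMod (a * c))) (a : ℤ) = 0 := by
    simp only [zmultiplesHom_apply, zsmul_eq_mul]
    have : ((a * c : ℕ) : ZMod (a * c)) = 0 := ZMod.natCast_self _
    push_cast at this ⊢
    exact this
  refine ⟨ZMod.lift a ⟨_, key⟩, ?_, ?_⟩
  · rw [ZMod.lift_injective]
    intro m hm
    simp only [zmultiplesHom_apply, zsmul_eq_mul] at hm
    have h2 : ((m * c : ℤ) : ZMod (a * c)) = 0 := by push_cast; exact hm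
    rw [ZMod.intCast_zmod_eq_zero_iff_dvd] at h2 <;> try exact ⟨hb⟩
    rw [ZMod.intCast_zmod_eq_zero_iff_dvd] <;> try exact ⟨ha⟩
    push_cast at h2
    exact Int.dvd_of_mul_dvd_mul_right (by exact_mod_cast hc) h2
  · intro y hy
    obtain ⟨m, rfl⟩ := ZMod.intCast_surjective y
    have h2 : ((a * m : ℤ) : ZMod (a * c)) = 0 := by
      push_cast; simpa using hy
    rw [ZMod.intCast_zmod_eq_zero_iff_dvd] at h2 <;> try exact ⟨hb⟩
    push_cast at h2
    obtain ⟨t, rfl⟩ := Int.dvd_of_mul_dvd_mul_left (by exact_mod_cast ha) h2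
    refine ⟨((t : ℤ) : ZMod a), ?_⟩
    rw [ZMod.lift_coe]
    simp [mul_comm]

lemma socle_coord {q p k : ℕ} (hq : IsPrimePow q) (hp : p.Prime)
    (hk : ¬ ∃ n, k ≤ n ∧ q = p ^ n) (b c : ZMod q) (h1 : p • b = 0)
    (h2 : b = p ^ (k - 1) • c) : b = 0 := by
  obtain ⟨l, m, hl, hm, rfl⟩ := hq
  have hl' := hl.nat_prime
  by_cases hlp : l = p
  · subst hlp
    have hmk : m ≤ k - 1 := by
      by_contra h
      exact hk ⟨m, by omega, rfl⟩
    obtain ⟨d, hd⟩ := pow_dvd_pow l hmk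
    rw [h2, hd, mul_comm, mul_smul, nsmul_eq_mul (l ^ m), ZMod.natCast_self]
    simp
  · have hcop : Nat.Coprime p (l ^ m) :=
      Nat.Coprime.pow_right _ ((Nat.coprime_primes hp hl').2 (fun h => hlp h.symm))
    have hu : IsUnit ((p : ℕ) : ZMod (l ^ m)) := (ZMod.isUnit_iff_coprime _ _).2 hcop
    rw [nsmul_eq_mul] at h1
    exact (hu.mul_right_eq_zero).1 h1

lemma dvd_of_torsion {p k n Q : ℕ} (hp : p.Prime) (hk : 1 ≤ k) (hn : k ≤ n) (h : Q = p ^ n)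
    (z : ZMod Q) (h1 : p • z = 0) : ∃ c : ZMod Q, z = p ^ (k - 1) • c := by
  subst h
  obtain ⟨m, rfl⟩ := ZMod.intCast_surjective z
  have h2 : ((p * m : ℤ) : ZMod (p ^ n)) = 0 := by
    push_cast; simpa using h1
  rw [ZMod.intCast_zmod_eq_zero_iff_dvd] at h2 <;> try exact ⟨pow_ne_zero _ hp.ne_zero⟩
  have h3 : (p : ℤ) * p ^ (k - 1) ∣ p * m := by
    refine dvd_trans ?_ h2
    rw [← pow_succ']
    push_cast
    exact pow_dvd_pow _ (by omega)
  obtain ⟨t, rfl⟩ := Int.dvd_of_mul_dvd_mul_left (by exact_mod_cast hp.ne_zero) h3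
  exact ⟨(t : ℤ), by simp⟩

open DirectSum in
lemma exists_socle {I : Type} [DecidableEq I] (q : I → ℕ) (hq : ∀ i, IsPrimePow (q i))
    (p k : ℕ) (hp : p.Prime) (hk : 1 ≤ k) :
    ∃ φ : (⨁ _ : {i : I // ∃ n, k ≤ n ∧ q i = p ^ n}, ZMod p) →+ (⨁ i, ZMod (q i)),
      Function.Injective φ ∧ (∀ x, ∃ y, φ x = p ^ (k - 1) • y) ∧
      (∀ x y, p • x = 0 → x = p ^ (k - 1) • y → x ∈ φ.range) := by
  classical
  have hdvd : ∀ i : {i : I // ∃ n, k ≤ n ∧ q i = p ^ n}, p ∣ q i.1 := by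
    rintro ⟨i, n, hn, h⟩
    simp only [h]
    exact dvd_pow_self _ (by omega)
  choose ψ hψ hr using fun i : {i : I // ∃ n, k ≤ n ∧ q i = p ^ n} =>
    exists_zmod_emb p (q i.1) hp.ne_zero (hq i.1).ne_zero (hdvd i)
  refine ⟨dsReindex (B := fun i => ZMod (q i)) Subtype.val ψ,
    dsReindex_injective _ Subtype.val_injective _ hψ, ?_, ?_⟩
  · intro x
    induction x using DirectSum.induction_on with
    | zero => exact ⟨0, by simp⟩
    | of i a =>
      -- `ψ i a` is killed by `p` hence divisible by `p^(n-1)`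
      have h1 : p • ψ i a = 0 := by
        rw [← map_nsmul, nsmul_eq_mul, ZMod.natCast_self, zero_mul, map_zero]
      have h2 : ∃ c : ZMod (q i.1), ψ i a = p ^ (k - 1) • c := by
        obtain ⟨i, n, hn, h⟩ := i
        exact dvd_of_torsion hp hk hn h _ h1
      obtain ⟨c, hc⟩ := h2
      refine ⟨DirectSum.of (fun i => ZMod (q i)) i.1 c, ?_⟩
      rw [← map_nsmul, ← hc]
      simp [dsReindex]
    | add x y hx hy =>
      obtain ⟨a, ha⟩ := hx
      obtain ⟨b, hb⟩ := hy
      exact ⟨a + b, by rw [map_add, ha, hb, smul_add]⟩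
  · intro x y hx hy
    have hx' : ∀ i, p • x i = 0 := fun i => by
      have := DFunLike.congr_fun hx i
      exact this
    have hy' : ∀ i, x i = p ^ (k - 1) • y i := fun i => by
      rw [hy]; rfl
    apply mem_range_dsReindex
    · intro j hj
      refine socle_coord (hq j) hp ?_ (x j) (y j) (hx' j) (hy' j)
      intro h
      exact hj ⟨⟨j, h⟩, rfl⟩
    · intro i
      exact hr i _ (hx' i.1)

open DirectSum in
lemma card_le_of_emb {I J : Type} (q : I → ℕ) (r : J → ℕ) (hq : ∀ i, IsPrimePow (q i))
    (hr : ∀ i, IsPrimePow (r i)) (f : (⨁ i, ZMod (q i)) →+ (⨁ j, ZMod (r j)))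
    (hf : Function.Injective f) (p k : ℕ) (hp : p.Prime) (hk : 1 ≤ k) :
    Cardinal.mk {i : I // ∃ n, k ≤ n ∧ q i = p ^ n} ≤
      Cardinal.mk {j : J // ∃ n, k ≤ n ∧ r j = p ^ n} := by
  classical
  haveI : Fact p.Prime := ⟨hp⟩
  obtain ⟨φ, hφ, hφd, -⟩ := exists_socle q hq p k hp hk
  obtain ⟨χ, hχ, -, hχr⟩ := exists_socle r hr p k hp hk
  have hmem : ∀ x, f (φ x) ∈ χ.range := by
    intro x
    obtain ⟨y, hy⟩ := hφd x
    refine hχr _ (f y) ?_ (by rw [hy, map_nsmul])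
    rw [← map_nsmul, ← map_nsmul]
    have : p • x = 0 := by
      rw [← Nat.cast_smul_eq_nsmul (ZMod p), ZMod.natCast_self, zero_smul]
    rw [this, map_zero, map_zero]
  let g := (AddMonoidHom.ofInjective hχ).symm.toAddMonoidHom.comp
    ((f.comp φ).codRestrict χ.range hmem)
  have hg : Function.Injective g := by
    refine (AddMonoidHom.ofInjective hχ).symm.injective.comp ?_
    intro x y h
    exact hφ (hf (congrArg Subtype.val h))
  have := LinearMap.rank_le_of_injective (AddMonoidHom.toZModLinearMap p g) hg
  simpa [rank_directSum] using this

lemma exists_matching {I J : Type} [Countable I] (h : I → ℕ) (g : J → ℕ) (N : ℕ)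
    (hN : ∀ i, h i ≤ N)
    (hc : ∀ k, 1 ≤ k → Cardinal.mk {i // k ≤ h i} ≤ Cardinal.mk {j // k ≤ g j}) :
    ∃ σ : {i // 1 ≤ h i} → J, Function.Injective σ ∧ ∀ i, h i.1 ≤ g (σ i) := by
  classical
  let F : {i // 1 ≤ h i} → Prop := fun i => {j | h i.1 ≤ g j}.Finite
  -- the part with finite target sets, by Hall
  let t : {i // F i} → Finset J := fun i => i.2.toFinset
  have hall : ∃ f : {i // F i} → J, Function.Injective f ∧ ∀ i, f i ∈ t i := by
    rw [← Finset.all_card_le_biUnion_card_iff_exists_injective]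
    intro S
    rcases S.eq_empty_or_nonempty with rfl | hS
    · simp
    obtain ⟨i0, hi0, hmin⟩ := S.exists_min_image (fun i => h i.1.1) hS
    refine le_trans ?_ (Finset.card_le_card (Finset.subset_biUnion_of_mem t hi0))
    have h1 := hc (h i0.1.1) i0.1.2
    have h2 : Cardinal.mk S ≤ Cardinal.mk {i // h i0.1.1 ≤ h i} :=
      Cardinal.mk_le_of_injective (f := fun s => ⟨s.1.1.1, hmin s.1 s.2⟩) (by
        intro a b hab
        simp only [Subtype.mk.injEq] at hab
        exact Subtype.ext (Subtype.ext (Subtype.ext hab)))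
    have h3 : Cardinal.mk {j // h i0.1.1 ≤ g j} = Cardinal.mk (t i0) :=
      Cardinal.mk_congr (Equiv.subtypeEquivRight (fun j => by simp [t]))
    have h4 := (h2.trans h1).trans_eq h3
    simpa using h4
  obtain ⟨f, hf, hft⟩ := hall
  have hft' : ∀ i, h i.1.1 ≤ g (f i) := fun i => by simpa [t] using hft i
  have hfin : (Set.range f).Finite := by
    by_cases hne : Nonempty {i // F i}
    · obtain ⟨i0, hmin⟩ : ∃ i0 : {i // F i}, ∀ i : {i // F i}, h i0.1.1 ≤ h i.1.1 :=
        ⟨Function.argmin (fun i : {i // F i} => h i.1.1),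
          fun i => Function.argmin_le (fun i : {i // F i} => h i.1.1) i⟩
      refine i0.2.subset ?_
      rintro _ ⟨i, rfl⟩
      exact (hmin i).trans (hft' i)
    · rw [not_nonempty_iff] at hne
      exact Set.finite_range f
  have hinf : ∃ f' : {i // ¬ F i} → J, Function.Injective f' ∧ (∀ i, h i.1.1 ≤ g (f' i)) ∧
      ∀ i, f' i ∉ Set.range f := by
    by_cases hne : Nonempty {i // ¬ F i}
    · obtain ⟨i0, hmax⟩ : ∃ i0 : {i // ¬ F i}, ∀ i : {i // ¬ F i}, h i.1.1 ≤ h i0.1.1 := by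
        have hfr : (Set.range (fun i : {i // ¬ F i} => h i.1.1)).Finite :=
          (Set.finite_Iic N).subset (by rintro _ ⟨i, rfl⟩; exact hN _)
        obtain ⟨m, ⟨i0, rfl⟩, hm⟩ := hfr.exists_maximal (Set.range_nonempty _)
        refine ⟨i0, fun i => ?_⟩
        by_contra hlt
        push Not at hlt
        exact absurd (hm ⟨i, rfl⟩ hlt.le) (not_le.2 hlt)
      have hI : ({j | h i0.1.1 ≤ g j} \ Set.range f).Infinite := Set.Infinite.sdiff i0.2 hfin
      obtain ⟨e, he⟩ := Countable.exists_injective_nat {i // ¬ F i}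
      let n := hI.natEmbedding
      refine ⟨fun i => (n (e i)).1, ?_, ?_, ?_⟩
      · intro a b hab
        exact he (n.injective (Subtype.ext hab))
      · intro i
        exact (hmax i).trans (n (e i)).2.1
      · intro i
        exact (n (e i)).2.2
    · rw [not_nonempty_iff] at hne
      exact ⟨fun i => hne.elim i, fun i => hne.elim i, fun i => hne.elim i, fun i => hne.elim i⟩
  obtain ⟨f', hf', hfg, hd⟩ := hinf
  refine ⟨fun i => if hi : F i then f ⟨i, hi⟩ else f' ⟨i, hi⟩, ?_, ?_⟩
  · intro a b hab
    by_cases ha : F a <;> by_cases hb : F b <;> simp only [ha, hb, dif_pos, dif_neg, not_false_eq_true] at hab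
    · exact congrArg Subtype.val (hf hab)
    · exact absurd ⟨_, hab⟩ (hd _)
    · exact absurd ⟨_, hab.symm⟩ (hd _)
    · exact congrArg Subtype.val (hf' hab)
  · intro i
    by_cases hi : F i
    · simpa [hi] using hft' ⟨i, hi⟩
    · simpa [hi] using hfg ⟨i, hi⟩

lemma height_iff {q p k : ℕ} (hq : IsPrimePow q) (hp : p.Prime) (hk : 1 ≤ k) :
    (∃ n, k ≤ n ∧ q = p ^ n) ↔ k ≤ q.factorization p := by
  constructor
  · rintro ⟨n, hn, rfl⟩
    simpa [hp.factorization_pow] using hn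
  · intro h
    obtain ⟨l, m, hl, hm, rfl⟩ := hq
    have hl' := hl.nat_prime
    rw [hl'.factorization_pow] at h
    by_cases hlp : l = p
    · subst hlp
      exact ⟨m, by simpa using h, rfl⟩
    · rw [Finsupp.single_eq_of_ne (fun h => hlp h.symm)] at h
      omega

lemma reindex_of_card_le {I J : Type} [Countable I] (q : I → ℕ) (r : J → ℕ)
    (hq : ∀ i, IsPrimePow (q i)) (hr : ∀ i, IsPrimePow (r i)) (hb : ∃ N, ∀ i, q i ≤ N)
    (hc : ∀ p k : ℕ, p.Prime → 1 ≤ k → Cardinal.mk {i : I // ∃ n, k ≤ n ∧ q i = p ^ n} ≤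
      Cardinal.mk {j : J // ∃ n, k ≤ n ∧ r j = p ^ n}) :
    ∃ s : I → J, Function.Injective s ∧ ∀ i, q i ∣ r (s i) := by
  classical
  obtain ⟨N, hN⟩ := hb
  have hm : ∀ p : {p : ℕ // p.Prime}, ∃ σ : {i // 1 ≤ (q i).factorization p} → J,
      Function.Injective σ ∧ ∀ i, (q i.1).factorization p ≤ (r (σ i)).factorization p := by
    rintro ⟨p, hp⟩
    refine exists_matching (fun i => (q i).factorization p) (fun j => (r j).factorization p) N
      (fun i => ((Nat.factorization_lt p (hq i).ne_zero).le).trans (hN i)) ?_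
    intro k hk
    have := hc p k hp hk
    rwa [Cardinal.mk_congr (Equiv.subtypeEquivRight (fun i => height_iff (hq i) hp hk)),
      Cardinal.mk_congr (Equiv.subtypeEquivRight (fun j => height_iff (hr j) hp hk))] at this
  choose σ hσ hle using hm
  have hP : ∀ i, ∃ p : {p : ℕ // p.Prime}, 1 ≤ (q i).factorization p ∧
      q i = p.1 ^ (q i).factorization p := by
    intro i
    obtain ⟨l, m, hl, hm, h⟩ := hq i
    refine ⟨⟨l, hl.nat_prime⟩, ?_⟩
    rw [← h, hl.nat_prime.factorization_pow]
    simpa using Nat.one_le_iff_ne_zero.2 hm.ne'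
  choose P hP1 hP2 using hP
  let s : I → J := fun i => σ (P i) ⟨i, hP1 i⟩
  have hs : ∀ i, (q i).factorization (P i) ≤ (r (s i)).factorization (P i) :=
    fun i => hle (P i) ⟨i, hP1 i⟩
  have hdvd : ∀ i, q i ∣ r (s i) := fun i => by
    conv_lhs => rw [hP2 i]
    exact (pow_dvd_pow _ (hs i)).trans (Nat.ordProj_dvd _ _)
  have hinj : Function.Injective s := by
    intro a b hab
    have hPab : P a = P b := by
      obtain ⟨n, hn, h1⟩ := (height_iff (hr (s a)) (P a).2 le_rfl).2 ((hP1 a).trans (hs a))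
      obtain ⟨m, hm, h2⟩ := (height_iff (hr (s b)) (P b).2 le_rfl).2 ((hP1 b).trans (hs b))
      rw [hab, h2] at h1
      have : (P a).1 ∣ (P b).1 ^ m := by
        rw [h1]; exact dvd_pow_self _ (by omega)
      exact Subtype.ext ((Nat.prime_dvd_prime_iff_eq (P a).2 (P b).2).1
        ((P a).2.dvd_of_dvd_pow this))
    have key : ∀ (p p' : {p : ℕ // p.Prime}) (h : p = p') (ha : 1 ≤ (q a).factorization p)
        (hb : 1 ≤ (q b).factorization p'), σ p ⟨a, ha⟩ = σ p' ⟨b, hb⟩ → a = b := by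
      rintro p _ rfl ha hb h
      exact congrArg Subtype.val (hσ p h)
    exact key _ _ hPab _ _ hab
  exact ⟨s, hinj, hdvd⟩

open DirectSum in
lemma emb_of_card_le {I J : Type} [Countable I] (q : I → ℕ) (r : J → ℕ)
    (hq : ∀ i, IsPrimePow (q i)) (hr : ∀ i, IsPrimePow (r i)) (hb : ∃ N, ∀ i, q i ≤ N)
    (hc : ∀ p k : ℕ, p.Prime → 1 ≤ k → Cardinal.mk {i : I // ∃ n, k ≤ n ∧ q i = p ^ n} ≤
      Cardinal.mk {j : J // ∃ n, k ≤ n ∧ r j = p ^ n}) :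
    ∃ f : (⨁ i, ZMod (q i)) →+ (⨁ j, ZMod (r j)), Function.Injective f := by
  classical
  obtain ⟨s, hinj, hdvd⟩ := reindex_of_card_le q r hq hr hb hc
  have hex : ∀ i, ∃ ψ : ZMod (q i) →+ ZMod (r (s i)), Function.Injective ψ := by
    intro i
    obtain ⟨ψ, hψ, -⟩ := exists_zmod_emb (q i) (r (s i)) (hq i).ne_zero (hr _).ne_zero (hdvd i)
    exact ⟨ψ, hψ⟩
  let ψ : ∀ i, ZMod (q i) →+ ZMod (r (s i)) := fun i => (hex i).choose
  have hψ : ∀ i, Function.Injective (ψ i) := fun i => (hex i).choose_spec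
  refine ⟨dsReindex (A := fun i => ZMod (q i)) (B := fun j => ZMod (r j)) s ψ, ?_⟩
  exact dsReindex_injective (A := fun i => ZMod (q i)) (B := fun j => ZMod (r j)) s hinj ψ hψ

lemma exists_sub_iff {G H : Type*} [AddCommGroup G] [AddCommGroup H] :
    (∃ K : AddSubgroup H, Nonempty (G ≃+ K)) ↔ ∃ f : G →+ H, Function.Injective f := by
  constructor
  · rintro ⟨K, ⟨e⟩⟩
    exact ⟨K.subtype.comp e.toAddMonoidHom, K.subtype_injective.comp e.injective⟩
  · rintro ⟨f, hf⟩
    exact ⟨f.range, ⟨AddMonoidHom.ofInjective hf⟩⟩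


/-- Two additive groups are weakly isomorphic if each is isomorphic to a subgroup
of the other. -/
def AddWeaklyIsomorphic (G H : Type*) [AddGroup G] [AddGroup H] : Prop :=
  (∃ K : AddSubgroup H, Nonempty (G ≃+ K)) ∧ (∃ K : AddSubgroup G, Nonempty (H ≃+ K))

theorem bounded_countable_abelian_weaklyIso_iff_mbar_eq
    (Gp Gm : Type*) [AddCommGroup Gp] [AddCommGroup Gm]
    (Ip Im : Type) [Countable Ip] [Countable Im]
    (qp : Ip → ℕ) (qm : Im → ℕ)
    (hqp : ∀ i, IsPrimePow (qp i)) (hqm : ∀ i, IsPrimePow (qm i))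
    (hbp : ∃ N, ∀ i, qp i ≤ N) (hbm : ∃ N, ∀ i, qm i ≤ N)
    (ep : Gp ≃+ DirectSum Ip fun i => ZMod (qp i))
    (em : Gm ≃+ DirectSum Im fun i => ZMod (qm i)) :
    AddWeaklyIsomorphic Gp Gm ↔
      ∀ p k : ℕ, p.Prime → 1 ≤ k →
        Cardinal.mk {i : Ip // ∃ n, k ≤ n ∧ qp i = p ^ n} =
          Cardinal.mk {i : Im // ∃ n, k ≤ n ∧ qm i = p ^ n} := by
  constructor
  · rintro ⟨h1, h2⟩ p k hp hk
    obtain ⟨f, hf⟩ := exists_sub_iff.1 h1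
    obtain ⟨g, hg⟩ := exists_sub_iff.1 h2
    refine le_antisymm ?_ ?_
    · exact card_le_of_emb qp qm hqp hqm
        ((em.toAddMonoidHom.comp f).comp ep.symm.toAddMonoidHom)
        ((em.injective.comp hf).comp ep.symm.injective) p k hp hk
    · exact card_le_of_emb qm qp hqm hqp
        ((ep.toAddMonoidHom.comp g).comp em.symm.toAddMonoidHom)
        ((ep.injective.comp hg).comp em.symm.injective) p k hp hk
  · intro h
    obtain ⟨f, hf⟩ := emb_of_card_le qp qm hqp hqm hbp (fun p k hp hk => (h p k hp hk).le)
    obtain ⟨g, hg⟩ := emb_of_card_le qm qp hqm hqp hbm (fun p k hp hk => (h p k hp hk).ge)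
    exact ⟨exists_sub_iff.2 ⟨(em.symm.toAddMonoidHom.comp f).comp ep.toAddMonoidHom,
        (em.symm.injective.comp hf).comp ep.injective⟩,
      exists_sub_iff.2 ⟨(ep.symm.toAddMonoidHom.comp g).comp em.toAddMonoidHom,
        (ep.symm.injective.comp hg).comp em.injective⟩⟩
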